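/- arXiv:1705.09217 — 5 statements merged into one kernel-verified Lean document; each statement's English description precedes it below -/
import Mathlib

section
/- Let F be a field and let R = F⟨u, x, y⟩/⟨u² − u, ux − x, xu − x, uy − y, yu − y, xy − u⟩ be the quotient of the free associative unital F-algebra on three generators u, x, y by the two-sided ideal generated by the listed relations. Then in R one has xy = u but yx ≠ u. In particular, u is an idempotent of R and R is not directly finite with respect to the idempotent u. -/
/-- The defining relations of the algebra `R = F⟨u,x,y⟩ / ⟨u² = u, ux = xu = x,
uy = yu = y, xy = u⟩`, where the generators `u, x, y` are indexed by `0, 1, 2 : Fin 3`.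
Quotienting the free algebra by the congruence generated by these relations is the same
as quotienting by the two-sided ideal generated by the corresponding differences. -/
inductive BergmanRel (F : Type*) [Field F] :
    FreeAlgebra F (Fin 3) → FreeAlgebra F (Fin 3) → Prop
  | u_idem : BergmanRel F (FreeAlgebra.ι F 0 * FreeAlgebra.ι F 0) (FreeAlgebra.ι F 0)
  | ux : BergmanRel F (FreeAlgebra.ι F 0 * FreeAlgebra.ι F 1) (FreeAlgebra.ι F 1)
  | xu : BergmanRel F (FreeAlgebra.ι F 1 * FreeAlgebra.ι F 0) (FreeAlgebra.ι F 1)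
  | uy : BergmanRel F (FreeAlgebra.ι F 0 * FreeAlgebra.ι F 2) (FreeAlgebra.ι F 2)
  | yu : BergmanRel F (FreeAlgebra.ι F 2 * FreeAlgebra.ι F 0) (FreeAlgebra.ι F 2)
  | xy : BergmanRel F (FreeAlgebra.ι F 1 * FreeAlgebra.ι F 2) (FreeAlgebra.ι F 0)

/-!
The shifts on sequences, `(x f) n = f (n + 1)` and `y f = (0, f 0, f 1, …)`, satisfy `x y = 1`, so
with `u` acting as the identity they represent the quotient algebra. But `y x` kills the entry at
`0`, so it is not the identity.
-/

/-- `IsCornerRightInverse e a b` says that `e` is idempotent, that `a` and `b` lie in the corner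
`eMe`, and that `b` is a right inverse of `a` there. Membership in `eMe` is encoded by
`e` acting as a two-sided identity. -/
structure IsCornerRightInverse {M : Type*} [Mul M] (e a b : M) : Prop where
  isIdempotentElem : IsIdempotentElem e
  idem_mul_left : e * a = a
  left_mul_idem : a * e = a
  idem_mul_right : e * b = b
  right_mul_idem : b * e = b
  left_mul_right : a * b = e

theorem IsCornerRightInverse.of_mul_eq_one {M : Type*} [MulOneClass M] {a b : M}
    (h : a * b = 1) : IsCornerRightInverse 1 a b :=
  ⟨.one, one_mul a, mul_one a, one_mul b, mul_one b, h⟩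

section Shift

variable (R : Type*) [Semiring R] {ι η : Type*} {s : ι → η}

theorem funLeft_comp_extendByZero (hs : s.Injective) :
    LinearMap.funLeft R R s ∘ₗ Function.ExtendByZero.linearMap R s = LinearMap.id := by
  ext f i
  exact hs.extend_apply f 0 i

theorem extendByZero_comp_funLeft_ne_id [Nontrivial R] (hs : ¬ s.Surjective) :
    Function.ExtendByZero.linearMap R s ∘ₗ LinearMap.funLeft R R s ≠ LinearMap.id := by
  obtain ⟨j, hj⟩ := not_forall.mp hs
  intro h
  have hone : Function.extend s (1 : ι → R) 0 j = 1 := congrFun (LinearMap.congr_fun h 1) j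
  rw [Function.extend_apply' _ _ _ hj] at hone
  exact zero_ne_one hone

end Shift

namespace BergmanRel

variable (F : Type*) [Field F]

/-- The images of `u`, `x`, `y` in the quotient algebra, indexed by `0`, `1`, `2`. -/
abbrev gen (i : Fin 3) : RingQuot (BergmanRel F) :=
  RingQuot.mkRingHom (BergmanRel F) (FreeAlgebra.ι F i)

variable {F} in
theorem gen_mul_gen {i j k : Fin 3}
    (h : BergmanRel F (FreeAlgebra.ι F i * FreeAlgebra.ι F j) (FreeAlgebra.ι F k)) :
    gen F i * gen F j = gen F k := by
  simpa only [map_mul] using RingQuot.mkRingHom_rel h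

theorem isCornerRightInverse_gen : IsCornerRightInverse (gen F 0) (gen F 1) (gen F 2) where
  isIdempotentElem := gen_mul_gen .u_idem
  idem_mul_left := gen_mul_gen .ux
  left_mul_idem := gen_mul_gen .xu
  idem_mul_right := gen_mul_gen .uy
  right_mul_idem := gen_mul_gen .yu
  left_mul_right := gen_mul_gen .xy

variable {F} {A : Type*} [Semiring A] [Algebra F A] {e a b : A}

theorem freeAlgebra_lift_eq (h : IsCornerRightInverse e a b) ⦃p q : FreeAlgebra F (Fin 3)⦄
    (hpq : BergmanRel F p q) :
    FreeAlgebra.lift F ![e, a, b] p = FreeAlgebra.lift F ![e, a, b] q := by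
  cases hpq <;>
    simp [h.isIdempotentElem.eq, h.idem_mul_left, h.left_mul_idem, h.idem_mul_right,
      h.right_mul_idem, h.left_mul_right]

/-- The universal property of the quotient algebra: `u`, `x`, `y` may be sent to any `e`, `a`, `b`
satisfying the defining relations. -/
def lift (h : IsCornerRightInverse e a b) : RingQuot (BergmanRel F) →ₐ[F] A :=
  RingQuot.liftAlgHom F ⟨FreeAlgebra.lift F ![e, a, b], freeAlgebra_lift_eq h⟩

theorem lift_gen (h : IsCornerRightInverse e a b) (i : Fin 3) :
    lift h (gen F i) = ![e, a, b] i := by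
  rw [gen, ← RingQuot.mkAlgHom_coe F, RingHom.coe_coe, lift, RingQuot.liftAlgHom_mkAlgHom_apply,
    FreeAlgebra.lift_ι_apply]

theorem mul_eq_of_gen_mul_gen_eq (hyx : gen F 2 * gen F 1 = gen F 0)
    (h : IsCornerRightInverse e a b) : b * a = e := by
  simpa [lift_gen] using congrArg (lift h) hyx

variable (F) in
theorem gen_two_mul_gen_one_ne_gen_zero : gen F 2 * gen F 1 ≠ gen F 0 := by
  intro hyx
  have hshift : IsCornerRightInverse (1 : Module.End F (ℕ → F))
      (LinearMap.funLeft F F Nat.succ) (Function.ExtendByZero.linearMap F Nat.succ) :=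
    .of_mul_eq_one (funLeft_comp_extendByZero F Nat.succ_injective)
  have hsucc : ¬ Function.Surjective Nat.succ := fun h => (h 0).elim Nat.succ_ne_zero
  exact extendByZero_comp_funLeft_ne_id F hsucc (mul_eq_of_gen_mul_gen_eq hyx hshift)

end BergmanRel

/-- In `R = F⟨u,x,y⟩/⟨u²−u, ux−x, xu−x, uy−y, yu−y, xy−u⟩` one has `xy = u` but
`yx ≠ u`; in particular `u` is an idempotent and `R` is not directly finite with
respect to the idempotent `u`. -/
theorem stmt_5 (F : Type*) [Field F]
    (u x y : RingQuot (BergmanRel F))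
    (hu : u = RingQuot.mkRingHom (BergmanRel F) (FreeAlgebra.ι F 0))
    (hx : x = RingQuot.mkRingHom (BergmanRel F) (FreeAlgebra.ι F 1))
    (hy : y = RingQuot.mkRingHom (BergmanRel F) (FreeAlgebra.ι F 2)) :
    x * y = u ∧ y * x ≠ u ∧ u * u = u ∧
      ¬ (∀ a b : RingQuot (BergmanRel F),
          u * a = a → a * u = a → u * b = b → b * u = b → a * b = u → b * a = u) := by
  subst hu hx hy
  have h := BergmanRel.isCornerRightInverse_gen F
  have hyx := BergmanRel.gen_two_mul_gen_one_ne_gen_zero F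
  exact ⟨h.left_mul_right, hyx, h.isIdempotentElem,
    fun H => hyx (H _ _ h.idem_mul_left h.left_mul_idem h.idem_mul_right h.right_mul_idem
      h.left_mul_right)⟩
end

section
/- Let F be a field and let R = F⟨u, x, y⟩/⟨u² − u, ux − x, xu − x, uy − y, yu − y, xy − u⟩ be the quotient of the free associative unital F-algebra on three generators u, x, y by the two-sided ideal generated by the listed relations. Then (x + u − 1)(y + u − 1) = 1 in R, but (y + u − 1)(x + u − 1) ≠ 1. In particular, R is not directly finite. -/
/-- The elements `x` and `y` lie in the corner `uAu` of an idempotent `u`, and `x` is a left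
inverse of `y` in this corner, whose identity is `u`. These are the relations of `BergmanRel`,
imposed on three elements of an arbitrary multiplicative structure. -/
structure IsCornerLeftInverse {A : Type*} [Mul A] (u x y : A) : Prop where
  isIdempotentElem : IsIdempotentElem u
  u_mul_x : u * x = x
  x_mul_u : x * u = x
  u_mul_y : u * y = y
  y_mul_u : y * u = y
  x_mul_y : x * y = u

theorem add_sub_one_mul_add_sub_one_eq_one_iff {A : Type*} [NonAssocRing A] {u a b : A}
    (hu : IsIdempotentElem u) (ha : a * u = a) (hb : u * b = b) :
    (a + u - 1) * (b + u - 1) = 1 ↔ a * b = u := by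
  have product_eq : (a + u - 1) * (b + u - 1) = a * b - u + 1 := by
    simp only [add_mul, sub_mul, mul_add, mul_sub, hu.eq, ha, hb, one_mul, mul_one]
    abel
  rw [product_eq, add_eq_right, sub_eq_zero]

namespace IsCornerLeftInverse

theorem of_mul_eq_one {M : Type*} [MulOneClass M] {a b : M} (h : a * b = 1) :
    IsCornerLeftInverse 1 a b :=
  ⟨.one, one_mul a, mul_one a, one_mul b, mul_one b, h⟩

section Lift

variable {F A : Type*} [Field F] [Semiring A] [Algebra F A] {u x y : A}

theorem freeAlgebraLift_eq_of_bergmanRel (h : IsCornerLeftInverse u x y)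
    ⦃p q : FreeAlgebra F (Fin 3)⦄ (hpq : BergmanRel F p q) :
    FreeAlgebra.lift F ![u, x, y] p = FreeAlgebra.lift F ![u, x, y] q := by
  cases hpq <;>
    simp [h.isIdempotentElem.eq, h.u_mul_x, h.x_mul_u, h.u_mul_y, h.y_mul_u,
      h.x_mul_y]

/-- The universal property of `RingQuot (BergmanRel F)`: the algebra homomorphism out of it that
sends its generators to three given elements satisfying the defining relations. -/
noncomputable def lift (h : IsCornerLeftInverse u x y) : RingQuot (BergmanRel F) →ₐ[F] A :=
  RingQuot.liftAlgHom F ⟨FreeAlgebra.lift F ![u, x, y], h.freeAlgebraLift_eq_of_bergmanRel⟩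

@[simp]
theorem lift_mkRingHom_ι (h : IsCornerLeftInverse u x y) (i : Fin 3) :
    h.lift (RingQuot.mkRingHom (BergmanRel F) (FreeAlgebra.ι F i)) = ![u, x, y] i := by
  rw [← RingQuot.mkAlgHom_coe F, AlgHom.coe_toRingHom, lift,
    RingQuot.liftAlgHom_mkAlgHom_apply, FreeAlgebra.lift_ι_apply]

end Lift

end IsCornerLeftInverse

theorem isCornerLeftInverse_mkRingHom_ι (F : Type*) [Field F] :
    IsCornerLeftInverse (RingQuot.mkRingHom (BergmanRel F) (FreeAlgebra.ι F 0))
      (RingQuot.mkRingHom (BergmanRel F) (FreeAlgebra.ι F 1))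
      (RingQuot.mkRingHom (BergmanRel F) (FreeAlgebra.ι F 2)) := by
  have map_relation {p q r : FreeAlgebra F (Fin 3)} (h : BergmanRel F (p * q) r) :
      RingQuot.mkRingHom (BergmanRel F) p * RingQuot.mkRingHom (BergmanRel F) q =
        RingQuot.mkRingHom (BergmanRel F) r := by
    rw [← map_mul, RingQuot.mkRingHom_rel h]
  exact
    { isIdempotentElem := map_relation .u_idem
      u_mul_x := map_relation .ux
      x_mul_u := map_relation .xu
      u_mul_y := map_relation .uy
      y_mul_u := map_relation .yu
      x_mul_y := map_relation .xy }

theorem exists_end_mul_eq_one_and_mul_ne_one (R M : Type*) [Semiring R] [AddCommMonoid M]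
    [Module R M] [Nontrivial M] :
    ∃ s t : Module.End R (ℕ → M), s * t = 1 ∧ t * s ≠ 1 := by
  refine ⟨LinearMap.funLeft R M Nat.succ, LinearMap.funLeft R M Nat.pred, rfl, fun h ↦ ?_⟩
  obtain ⟨m, hm⟩ := exists_ne (0 : M)
  have value_at_zero : (0 : M) = m := congrFun (LinearMap.congr_fun h (Pi.single 0 m)) 0
  exact hm value_at_zero.symm

theorem mkRingHom_ι_two_mul_ι_one_ne_ι_zero (F : Type*) [Field F] :
    RingQuot.mkRingHom (BergmanRel F) (FreeAlgebra.ι F 2) *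
        RingQuot.mkRingHom (BergmanRel F) (FreeAlgebra.ι F 1) ≠
      RingQuot.mkRingHom (BergmanRel F) (FreeAlgebra.ι F 0) := by
  obtain ⟨s, t, hst, hts⟩ := exists_end_mul_eq_one_and_mul_ne_one F F
  have relations := IsCornerLeftInverse.of_mul_eq_one hst
  intro h
  exact hts (by simpa using congrArg (relations.lift (F := F)) h)

/-- In `R = F⟨u,x,y⟩/⟨u²−u, ux−x, xu−x, uy−y, yu−y, xy−u⟩` one has
`(x + u − 1)(y + u − 1) = 1` but `(y + u − 1)(x + u − 1) ≠ 1`; in particular `R` is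
not directly finite. -/
theorem stmt_6 (F : Type*) [Field F]
    (u x y : RingQuot (BergmanRel F))
    (hu : u = RingQuot.mkRingHom (BergmanRel F) (FreeAlgebra.ι F 0))
    (hx : x = RingQuot.mkRingHom (BergmanRel F) (FreeAlgebra.ι F 1))
    (hy : y = RingQuot.mkRingHom (BergmanRel F) (FreeAlgebra.ι F 2)) :
    (x + u - 1) * (y + u - 1) = 1 ∧ (y + u - 1) * (x + u - 1) ≠ 1 ∧
      ¬ (∀ a b : RingQuot (BergmanRel F), a * b = 1 → b * a = 1) := by
  subst hu hx hy
  have relations := isCornerLeftInverse_mkRingHom_ι F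
  have mul_eq_one := (add_sub_one_mul_add_sub_one_eq_one_iff relations.isIdempotentElem
    relations.x_mul_u relations.u_mul_y).mpr relations.x_mul_y
  have mul_ne_one := (add_sub_one_mul_add_sub_one_eq_one_iff relations.isIdempotentElem
    relations.y_mul_u relations.u_mul_x).not.mpr (mkRingHom_ι_two_mul_ι_one_ne_ι_zero F)
  exact ⟨mul_eq_one, mul_ne_one, fun directly_finite ↦
    mul_ne_one (directly_finite _ _ mul_eq_one)⟩
end

section
/- Let R be a unital ring such that for every simple left R-module S and every index set ι, the direct sum S^{(ι)} of copies of S indexed by ι is an injective left R-module. Then R is directly finite: for all x, y ∈ R, xy = 1 implies yx = 1. -/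
universe u

/-- A module `Q` is injective if every `R`-linear map into `Q` extends along every
injective `R`-linear map. -/
def IsInjectiveModule (R : Type u) [Ring R] (Q : Type u) [AddCommGroup Q]
    [Module R Q] : Prop :=
  ∀ (M N : Type u) [AddCommGroup M] [AddCommGroup N] [Module R M] [Module R N]
    (f : M →ₗ[R] N), Function.Injective f →
      ∀ g : M →ₗ[R] Q, ∃ h : N →ₗ[R] Q, ∀ m : M, h (f m) = g m

/-!
Let `x * y = 1`. If `M` is a module such that `ℕ →₀ M` is injective and `v : ℕ → M` is a sequence,
then by Baer's criterion there is a cofinite set of indices `i` such that every `a : R` killing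
almost all `v j` kills each of these `v i`. For `v j = y ^ j • m`, the element
`(1 - y * x) * x ^ i` kills `v j` for all `j > i` but sends `v i` to `(1 - y * x) • m`.
Hence `1 - y * x` kills `M`. Consequently `x` acts injectively on every simple module, so it lies in
no maximal left ideal and has a left inverse, which must be `y`.
-/

section Baer

open Filter

variable {R : Type*} [Ring R]

theorem exists_map_smul_eq_of_baer {Q P : Type*} [AddCommGroup Q] [Module R Q] [AddCommGroup P]
    [Module R P] (hQ : Module.Baer R Q) {j : Q →ₗ[R] P} (hj : Function.Injective j) (p : P) :
    ∃ q : Q, ∀ a : R, a • p ∈ LinearMap.range j → j (a • q) = a • p := by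
  let φ : R →ₗ[R] P := LinearMap.toSpanSingleton R P p
  let g : (LinearMap.range j).comap φ →ₗ[R] Q :=
    (LinearEquiv.ofInjective j hj).symm ∘ₗ φ.submoduleComap (LinearMap.range j)
  obtain ⟨g', hg'⟩ := hQ _ g
  refine ⟨g' 1, fun a ha ↦ ?_⟩
  calc
    j (a • g' 1) = j (g' a) := by rw [← map_smul, smul_eq_mul, mul_one]
    _ = j (g ⟨a, ha⟩) := by rw [hg' a ha]
    _ = a • p := congrArg Subtype.val ((LinearEquiv.ofInjective j hj).apply_symm_apply ⟨a • p, ha⟩)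

variable {M : Type*} [AddCommGroup M] [Module R M]

theorem eventually_cofinite_smul_eq_zero_of_baer_finsupp {ι : Type*}
    (hM : Module.Baer R (ι →₀ M)) (v : ι → M) :
    ∀ᶠ i in cofinite, ∀ a : R, (∀ᶠ j in cofinite, a • v j = 0) → a • v i = 0 := by
  obtain ⟨q, hq⟩ := exists_map_smul_eq_of_baer hM
    (j := Finsupp.lcoeFun (R := R)) DFunLike.coe_injective v
  filter_upwards [q.hasFiniteSupport.eventually_cofinite_notMem] with i hi a ha
  have hav : a • v ∈ LinearMap.range (Finsupp.lcoeFun (R := R)) :=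
    ⟨Finsupp.ofSupportFinite (a • v) ha, rfl⟩
  calc
    a • v i = a • q i := (congrFun (hq a hav) i).symm
    _ = 0 := by rw [Function.notMem_support.mp hi, smul_zero]

end Baer

theorem mul_smul_eq_self_of_baer_finsupp {R M : Type*} [Ring R] [AddCommGroup M] [Module R M]
    (hM : Module.Baer R (ℕ →₀ M)) {x y : R} (hxy : x * y = 1) (m : M) : (y * x) • m = m := by
  have smul_shift (i k : ℕ) :
      ((1 - y * x) * x ^ i) • y ^ (i + k) • m = ((1 - y * x) * y ^ k) • m := by
    rw [smul_smul, mul_assoc, pow_add, ← mul_assoc (x ^ i), pow_mul_pow_eq_one i hxy, one_mul]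
  have smul_eq_zero_of_lt {i j : ℕ} (hij : i < j) :
      ((1 - y * x) * x ^ i) • y ^ j • m = 0 := by
    obtain ⟨k, rfl⟩ := Nat.exists_eq_add_of_lt hij
    have one_sub_mul_self : (1 - y * x) * y = 0 := by
      rw [sub_mul, one_mul, mul_assoc, hxy, mul_one, sub_self]
    rw [add_assoc, smul_shift, pow_succ', ← mul_assoc, one_sub_mul_self, zero_mul, zero_smul]
  obtain ⟨i, hi⟩ := (eventually_cofinite_smul_eq_zero_of_baer_finsupp hM (y ^ · • m)).exists
  have smul_eq_zero : ((1 - y * x) * x ^ i) • y ^ i • m = 0 := by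
    refine hi _ ?_
    rw [Nat.cofinite_eq_atTop]
    exact (Filter.eventually_gt_atTop i).mono fun j ↦ smul_eq_zero_of_lt
  have one_sub_smul : (1 - y * x) • m = 0 := by
    simpa only [add_zero, pow_zero, mul_one] using (smul_shift i 0).symm.trans smul_eq_zero
  rw [sub_smul, one_smul, sub_eq_zero] at one_sub_smul
  exact one_sub_smul.symm

theorem exists_mul_eq_one_of_forall_isSimpleModule {R : Type u} [Ring R] {a : R}
    (ha : ∀ (S : Type u) [AddCommGroup S] [Module R S], IsSimpleModule R S →
      ∀ s : S, a • s = 0 → s = 0) :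
    ∃ b : R, b * a = 1 := by
  rw [← Ideal.mem_span_singleton', ← Ideal.eq_top_iff_one]
  by_contra hspan
  obtain ⟨m, hm, hle⟩ := Ideal.exists_le_maximal _ hspan
  have smul_mk_one : a • m.mkQ 1 = 0 := by
    rw [← map_smul, smul_eq_mul, mul_one]
    exact (Submodule.Quotient.mk_eq_zero m).mpr (hle (Ideal.mem_span_singleton_self a))
  have mk_one : m.mkQ 1 = 0 :=
    ha (R ⧸ m) (isSimpleModule_iff_isCoatom.mpr hm.out) _ smul_mk_one
  exact hm.ne_top ((Ideal.eq_top_iff_one m).mpr ((Submodule.Quotient.mk_eq_zero m).mp mk_one))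

theorem IsInjectiveModule.baer {R Q : Type u} [Ring R] [AddCommGroup Q] [Module R Q]
    (hQ : IsInjectiveModule R Q) : Module.Baer R Q := fun I g ↦
  have ⟨g', hg'⟩ := hQ I R I.subtype I.injective_subtype g
  ⟨g', fun a ha ↦ hg' ⟨a, ha⟩⟩

theorem stmt_8_general {R : Type u} [Ring R]
    (h : ∀ (S : Type u) [AddCommGroup S] [Module R S], IsSimpleModule R S →
      Module.Baer R (ℕ →₀ S)) :
    IsDedekindFiniteMonoid R where
  mul_eq_one_symm {x y} hxy := by
    obtain ⟨z, hzx⟩ : ∃ z : R, z * x = 1 := by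
      refine exists_mul_eq_one_of_forall_isSimpleModule fun S _ _ hS s hs ↦ ?_
      rw [← mul_smul_eq_self_of_baer_finsupp (h S hS) hxy s, mul_smul, hs, smul_zero]
    rwa [← left_inv_eq_right_inv hzx hxy]

/-- If every direct sum of copies of every simple left `R`-module is injective
(`R` is a Σ-V ring), then `R` is directly finite. -/
theorem stmt_8 {R : Type u} [Ring R]
    (h : ∀ (S : Type u) [AddCommGroup S] [Module R S], IsSimpleModule R S →
      ∀ ι : Type u, IsInjectiveModule R (ι →₀ S)) :
    ∀ x y : R, x * y = 1 → y * x = 1 := by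
  have := stmt_8_general fun S _ _ hS ↦
    (h S hS (ULift ℕ)).baer.of_equiv (Finsupp.domLCongr Equiv.ulift)
  exact fun _ _ ↦ mul_eq_one_symm
end

section
/- Let R be a ℤ-graded unital ring in which every finitely generated homogeneous right ideal is generated by a homogeneous idempotent (this holds, e.g., when R is graded von Neumann regular). Let A be a homogeneous right ideal of R that is countably generated but not finitely generated. Then there exists a sequence (eₙ)_{n ≥ 1} of pairwise orthogonal homogeneous idempotents in A (i.e., eₙ² = eₙ, each eₙ homogeneous, and eₘeₙ = 0 for m ≠ n) such that A is the internal direct sum A = ⊕_{n ≥ 1} eₙR of the right ideals eₙR. -/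
/-!
The idempotents are the consecutive differences of an increasing chain of idempotents of degree `0`
in `A`, which absorbs a sequence of homogeneous generators of `A` one at a time. If `e ∈ A` is an
idempotent of degree `0` and `x ∈ A` is homogeneous, then `(1 - e) * x` generates the same right
ideal as some idempotent `h` of degree `0` with `e * h = 0`, and `e' = e + h * (1 - e)` is an
idempotent of `A` above `e` with `e' * x = x`.
-/

open DirectSum

section PrincipalRightIdeals

variable {R : Type*} [Semiring R]

theorem mem_span_op_singleton {x y : R} :
    x ∈ Submodule.span Rᵐᵒᵖ ({y} : Set R) ↔ ∃ r, y * r = x := by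
  simp only [Submodule.mem_span_singleton, MulOpposite.exists, op_smul_eq_mul]

theorem exists_mul_mul_eq_of_span_op_singleton_eq {x e : R} (he : IsIdempotentElem e)
    (h : Submodule.span Rᵐᵒᵖ ({x} : Set R) = Submodule.span Rᵐᵒᵖ ({e} : Set R)) :
    ∃ r, x * r * x = x := by
  obtain ⟨r, hr⟩ := mem_span_op_singleton.1 (h ▸ Submodule.mem_span_singleton_self e)
  obtain ⟨s, hs⟩ := mem_span_op_singleton.1 (h ▸ Submodule.mem_span_singleton_self x)
  exact ⟨r, by rw [hr, ← hs, ← mul_assoc, he.eq]⟩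

theorem iSupIndep_span_op_singleton_of_orthogonalIdempotents {κ : Type*} {e : κ → R}
    (he : OrthogonalIdempotents e) :
    iSupIndep fun k ↦ Submodule.span Rᵐᵒᵖ ({e k} : Set R) := by
  intro k
  rw [Submodule.disjoint_def]
  intro x hx hx'
  have others_le_ker : ⨆ (j) (_ : j ≠ k), Submodule.span Rᵐᵒᵖ ({e j} : Set R) ≤
      LinearMap.ker (LinearMap.mulLeft Rᵐᵒᵖ (e k)) :=
    iSup₂_le fun j hj ↦ (Submodule.span_singleton_le_iff_mem _ _).2 (he.ortho hj.symm)
  obtain ⟨r, rfl⟩ := mem_span_op_singleton.1 hx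
  calc e k * r = e k * (e k * r) := by rw [← mul_assoc, (he.idem k).eq]
    _ = 0 := others_le_ker hx'

end PrincipalRightIdeals

section Idempotents

variable {R : Type*}

/-- The natural order on the idempotents of a ring: `e` lies below `f` when `e * f = e` and
`f * e = e`. It is stated for arbitrary elements, so it is reflexive exactly at the idempotents. -/
def IdempotentLE [Mul R] (e f : R) : Prop :=
  e * f = e ∧ f * e = e

theorem IdempotentLE.trans [Semigroup R] {e f g : R} (hef : IdempotentLE e f)
    (hfg : IdempotentLE f g) : IdempotentLE e g := by
  constructor
  · rw [← hef.1, mul_assoc, hfg.1]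
  · rw [← hef.2, ← mul_assoc, hfg.2]

theorem idempotentLE_of_le [Semigroup R] {f : ℕ → R} (hf : ∀ n, IsIdempotentElem (f n))
    (hchain : ∀ n, IdempotentLE (f n) (f (n + 1))) {m n : ℕ} (hmn : m ≤ n) :
    IdempotentLE (f m) (f n) := by
  induction n, hmn using Nat.le_induction with
  | base => exact ⟨hf m, hf m⟩
  | succ n _ ih => exact ih.trans (hchain n)

theorem orthogonalIdempotents_succ_sub [Ring R] {f : ℕ → R} (hf : ∀ n, IsIdempotentElem (f n))
    (hchain : ∀ n, IdempotentLE (f n) (f (n + 1))) :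
    OrthogonalIdempotents fun n ↦ f (n + 1) - f n where
  idem n := (hf n).sub (hf (n + 1)) (hchain n).1 (hchain n).2
  ortho := by
    have mul_of_le {m n : ℕ} (hmn : m ≤ n) := idempotentLE_of_le hf hchain hmn
    intro m n hmn
    rcases hmn.lt_or_gt with hlt | hlt
    · simp only [sub_mul, mul_sub, (mul_of_le hlt.le).1, (mul_of_le hlt.le.step).1,
        (mul_of_le (Nat.succ_le_of_lt hlt)).1, (mul_of_le (Nat.succ_le_succ hlt.le)).1, sub_self]
    · simp only [sub_mul, mul_sub, (mul_of_le hlt.le).2, (mul_of_le hlt.le.step).2,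
        (mul_of_le (Nat.succ_le_of_lt hlt)).2, (mul_of_le (Nat.succ_le_succ hlt.le)).2, sub_self]

variable [Ring R] {e h : R}

theorem idempotentLE_add_mul_one_sub (he : IsIdempotentElem e) (heh : e * h = 0) :
    IdempotentLE e (e + h * (1 - e)) := by
  constructor
  · rw [mul_add, he.eq, ← mul_assoc, heh, zero_mul, add_zero]
  · rw [add_mul, he.eq, mul_assoc, he.one_sub_mul_self, mul_zero, add_zero]

theorem isIdempotentElem_add_mul_one_sub (he : IsIdempotentElem e) (hh : IsIdempotentElem h)
    (heh : e * h = 0) : IsIdempotentElem (e + h * (1 - e)) := by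
  have one_sub_absorb : (1 - e) * h = h := by rw [sub_mul, one_mul, heh, sub_zero]
  have idem : IsIdempotentElem (h * (1 - e)) := by
    rw [IsIdempotentElem, mul_assoc, ← mul_assoc (1 - e), one_sub_absorb, ← mul_assoc, hh.eq]
  refine he.add idem ?_
  rw [← mul_assoc, heh, zero_mul, mul_assoc, he.one_sub_mul_self, mul_zero, add_zero]

end Idempotents

section Homogeneous

theorem exists_seq_isHomogeneousElem_span_eq {ι σ S M : Type*} [DecidableEq ι] [Nonempty ι]
    [Semiring S] [AddCommMonoid M] [Module S M] [SetLike σ M] [AddSubmonoidClass σ M]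
    (ℳ : ι → σ) [Decomposition ℳ] {A : Submodule S M} (hA : A.IsHomogeneous ℳ)
    (hcg : ∃ s : Set M, s.Countable ∧ Submodule.span S s = A) :
    ∃ a : ℕ → M, (∀ k, SetLike.IsHomogeneousElem ℳ (a k)) ∧
      Submodule.span S (Set.range a) = A := by
  classical
  obtain ⟨s, hs, rfl⟩ := hcg
  let components : Set M := ⋃ x ∈ s, (fun i ↦ (decompose ℳ x i : M)) '' (decompose ℳ x).support
  have components_countable : components.Countable :=
    hs.biUnion fun x _ ↦ (Finset.countable_toSet _).image _
  obtain ⟨a, ha⟩ := (components_countable.insert 0).exists_eq_range (Set.insert_nonempty 0 _)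
  have mem_range {k : ℕ} : a k ∈ insert 0 components := ha ▸ Set.mem_range_self k
  refine ⟨a, fun k ↦ ?_, le_antisymm ?_ ?_⟩
  · rcases mem_range with h0 | hk
    · exact ⟨Classical.arbitrary ι, h0 ▸ zero_mem _⟩
    · obtain ⟨x, -, i, -, hi⟩ := Set.mem_iUnion₂.1 hk
      exact ⟨i, hi ▸ SetLike.coe_mem _⟩
  · rw [← ha, Submodule.span_insert_zero, Submodule.span_le]
    refine Set.iUnion₂_subset fun x hx ↦ Set.image_subset_iff.2 fun i _ ↦ ?_
    exact hA i (Submodule.subset_span hx)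
  · rw [← ha, Submodule.span_insert_zero, Submodule.span_le]
    intro x hx
    rw [SetLike.mem_coe, ← sum_support_decompose ℳ x]
    exact sum_mem fun i hi ↦ Submodule.subset_span
      (Set.mem_biUnion hx (Set.mem_image_of_mem _ hi))

variable {ι σ R : Type*} [DecidableEq ι] [AddGroup ι] [SetLike σ R]

theorem isHomogeneous_span_op_singleton [Semiring R] [AddSubmonoidClass σ R] (𝒜 : ι → σ)
    [GradedRing 𝒜] {x : R} (hx : SetLike.IsHomogeneousElem 𝒜 x) :
    (Submodule.span Rᵐᵒᵖ ({x} : Set R)).IsHomogeneous 𝒜 := by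
  obtain ⟨i, hi⟩ := hx
  intro n y hy
  obtain ⟨r, rfl⟩ := mem_span_op_singleton.1 hy
  refine mem_span_op_singleton.2 ⟨decompose 𝒜 r (-i + n), ?_⟩
  rw [← coe_decompose_mul_add_of_left_mem 𝒜 hi, add_neg_cancel_left]

end Homogeneous

/-- Graded von Neumann regularity of a family `𝒜` of homogeneous components: every homogeneous
`a` has a quasi-inverse `x`, that is `a = a * x * a`. The element `x` need not be homogeneous. -/
def IsGradedRegular {ι σ R : Type*} [Mul R] [SetLike σ R] (𝒜 : ι → σ) : Prop :=
  ∀ a, SetLike.IsHomogeneousElem 𝒜 a → ∃ x, a * x * a = a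

namespace IsGradedRegular

variable {ι σ R : Type*} [DecidableEq ι] [AddGroup ι] [SetLike σ R] {𝒜 : ι → σ}

theorem of_fg_homogeneous_eq_span_idempotent [Semiring R] [AddSubmonoidClass σ R] [GradedRing 𝒜]
    (h : ∀ I : Submodule Rᵐᵒᵖ R, I.IsHomogeneous 𝒜 → I.FG →
      ∃ e, IsIdempotentElem e ∧ I = Submodule.span Rᵐᵒᵖ ({e} : Set R)) :
    IsGradedRegular 𝒜 := by
  intro x hx
  obtain ⟨e, he, hspan⟩ :=
    h _ (isHomogeneous_span_op_singleton 𝒜 hx) (Submodule.fg_span_singleton x)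
  exact exists_mul_mul_eq_of_span_op_singleton_eq he hspan

theorem exists_mul_mem_zero [Semiring R] [AddSubmonoidClass σ R] [GradedRing 𝒜]
    (h𝒜 : IsGradedRegular 𝒜) {x : R} (hx : SetLike.IsHomogeneousElem 𝒜 x) :
    ∃ z, x * z ∈ 𝒜 0 ∧ x * z * x = x := by
  obtain ⟨z, hz⟩ := h𝒜 x hx
  obtain ⟨i, hi⟩ := hx
  have hcomp : x * decompose 𝒜 z (-i) = decompose 𝒜 (x * z) 0 := by
    rw [← coe_decompose_mul_add_of_left_mem 𝒜 hi, add_neg_cancel]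
  refine ⟨decompose 𝒜 z (-i), hcomp ▸ SetLike.coe_mem _, ?_⟩
  rw [hcomp, ← coe_decompose_mul_add_of_right_mem 𝒜 hi, zero_add, hz, decompose_of_mem_same 𝒜 hi]

variable [Ring R] [AddSubgroupClass σ R] [GradedRing 𝒜] {A : Submodule Rᵐᵒᵖ R}

theorem exists_idempotentLE_mul_eq (h𝒜 : IsGradedRegular 𝒜) {e x : R}
    (he : IsIdempotentElem e) (he0 : e ∈ 𝒜 0) (heA : e ∈ A)
    (hx : SetLike.IsHomogeneousElem 𝒜 x) (hxA : x ∈ A) :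
    ∃ e', (IsIdempotentElem e' ∧ e' ∈ 𝒜 0 ∧ e' ∈ A) ∧ IdempotentLE e e' ∧ e' * x = x := by
  have mul_mem_A {y : R} (hy : y ∈ A) (r : R) : y * r ∈ A := A.smul_mem (MulOpposite.op r) hy
  have one_sub_mem : 1 - e ∈ 𝒜 0 := sub_mem SetLike.GradedOne.one_mem he0
  obtain ⟨z, hz0, hz⟩ := h𝒜.exists_mul_mem_zero (SetLike.IsHomogeneousElem.mul ⟨0, one_sub_mem⟩ hx)
  set y := (1 - e) * x
  set h := y * z
  have hh : IsIdempotentElem h := by rw [IsIdempotentElem, ← mul_assoc, hz]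
  have heh : e * h = 0 := by rw [← mul_assoc, ← mul_assoc, he.mul_one_sub_self, zero_mul, zero_mul]
  have y_eq : y = x - e * x := one_sub_mul e x
  have hyA : y ∈ A := y_eq ▸ sub_mem hxA (mul_mem_A heA x)
  have h_mul_mem : h * (1 - e) ∈ 𝒜 0 := by
    simpa only [add_zero] using SetLike.mul_mem_graded hz0 one_sub_mem
  refine ⟨e + h * (1 - e), ⟨isIdempotentElem_add_mul_one_sub he hh heh, add_mem he0 h_mul_mem,
    add_mem heA (mul_mem_A (mul_mem_A hyA z) _)⟩, idempotentLE_add_mul_one_sub he heh, ?_⟩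
  calc (e + h * (1 - e)) * x = e * x + h * y := by rw [add_mul, mul_assoc h]
    _ = e * x + (1 - e) * x := by rw [hz]
    _ = x := by rw [← add_mul, add_sub_cancel, one_mul]

theorem exists_idempotentLE_chain (h𝒜 : IsGradedRegular 𝒜) {a : ℕ → R}
    (ha : ∀ n, SetLike.IsHomogeneousElem 𝒜 (a n)) (haA : ∀ n, a n ∈ A) :
    ∃ f : ℕ → R, f 0 = 0 ∧ (∀ n, IsIdempotentElem (f n) ∧ f n ∈ 𝒜 0 ∧ f n ∈ A) ∧
      ∀ n, IdempotentLE (f n) (f (n + 1)) ∧ f (n + 1) * a n = a n := by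
  let Idem := {e : R // IsIdempotentElem e ∧ e ∈ 𝒜 0 ∧ e ∈ A}
  have exists_next (n : ℕ) (e : Idem) :
      ∃ e' : Idem, IdempotentLE e.1 e'.1 ∧ e'.1 * a n = a n := by
    obtain ⟨e', he', hle⟩ :=
      h𝒜.exists_idempotentLE_mul_eq e.2.1 e.2.2.1 e.2.2.2 (ha n) (haA n)
    exact ⟨⟨e', he'⟩, hle⟩
  choose next hnext using exists_next
  let f : ℕ → Idem := Nat.rec ⟨0, .zero, zero_mem _, zero_mem _⟩ next
  exact ⟨fun n ↦ (f n).1, rfl, fun n ↦ (f n).2, fun n ↦ hnext n (f n)⟩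

end IsGradedRegular

theorem stmt_11_general {ι σ R : Type*} [DecidableEq ι] [AddGroup ι] [Ring R] [SetLike σ R]
    [AddSubgroupClass σ R] (𝒜 : ι → σ) [GradedRing 𝒜] (h𝒜 : IsGradedRegular 𝒜)
    {A : Submodule Rᵐᵒᵖ R} (hA : A.IsHomogeneous 𝒜)
    (hcg : ∃ s : Set R, s.Countable ∧ Submodule.span Rᵐᵒᵖ s = A) :
    ∃ e : ℕ → R, OrthogonalIdempotents e ∧ (∀ n, e n ∈ 𝒜 0) ∧
      (⨆ n, Submodule.span Rᵐᵒᵖ ({e n} : Set R)) = A ∧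
      iSupIndep fun n ↦ Submodule.span Rᵐᵒᵖ ({e n} : Set R) := by
  obtain ⟨a, ha, rfl⟩ := exists_seq_isHomogeneousElem_span_eq 𝒜 hA hcg
  obtain ⟨f, hf0, hf, hchain⟩ := h𝒜.exists_idempotentLE_chain ha
    fun n ↦ Submodule.subset_span (R := Rᵐᵒᵖ) (Set.mem_range_self n)
  have horth := orthogonalIdempotents_succ_sub (fun n ↦ (hf n).1) fun n ↦ (hchain n).1
  refine ⟨fun n ↦ f (n + 1) - f n, horth, fun n ↦ sub_mem (hf (n + 1)).2.1 (hf n).2.1,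
    le_antisymm ?_ ?_, iSupIndep_span_op_singleton_of_orthogonalIdempotents horth⟩
  · refine iSup_le fun n ↦ (Submodule.span_singleton_le_iff_mem _ _).2 ?_
    exact sub_mem (hf (n + 1)).2.2 (hf n).2.2
  · have f_mem (n : ℕ) : f n ∈ ⨆ k, Submodule.span Rᵐᵒᵖ ({f (k + 1) - f k} : Set R) := by
      rw [← sub_zero (f n), ← hf0, ← Finset.sum_range_sub]
      exact sum_mem fun k _ ↦ Submodule.mem_iSup_of_mem k (Submodule.mem_span_singleton_self _)
    rw [Submodule.span_le]
    rintro _ ⟨n, rfl⟩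
    rw [← (hchain n).2]
    exact Submodule.smul_mem _ (MulOpposite.op (a n)) (f_mem (n + 1))

/-- Let `R` be a `ℤ`-graded unital ring in which every finitely generated homogeneous
right ideal is generated by a homogeneous idempotent (e.g. `R` graded von Neumann
regular).  If `A` is a countably generated but not finitely generated homogeneous right
ideal, then `A = ⊕ₙ eₙR` for a sequence of pairwise orthogonal homogeneous idempotents
`eₙ ∈ A`.  Right ideals are formalized as `Rᵐᵒᵖ`-submodules of `R`; a right ideal `I`
is homogeneous if it contains all homogeneous components of each of its elements. -/
theorem stmt_11 {R : Type*} [Ring R] (𝒜 : ℤ → AddSubgroup R) [GradedRing 𝒜]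
    (hreg : ∀ I : Submodule Rᵐᵒᵖ R,
      (∀ a ∈ I, ∀ n : ℤ, ((DirectSum.decompose 𝒜 a n : 𝒜 n) : R) ∈ I) → I.FG →
        ∃ e : R, e * e = e ∧ (∃ i : ℤ, e ∈ 𝒜 i) ∧ I = Submodule.span Rᵐᵒᵖ ({e} : Set R))
    (A : Submodule Rᵐᵒᵖ R)
    (hA : ∀ a ∈ A, ∀ n : ℤ, ((DirectSum.decompose 𝒜 a n : 𝒜 n) : R) ∈ A)
    (hcg : ∃ s : Set R, s.Countable ∧ Submodule.span Rᵐᵒᵖ s = A)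
    (hnfg : ¬ A.FG) :
    ∃ e : ℕ → R,
      (∀ n, e n ∈ A) ∧
      (∀ n, e n * e n = e n) ∧
      (∀ n, ∃ i : ℤ, e n ∈ 𝒜 i) ∧
      (∀ m n, m ≠ n → e m * e n = 0) ∧
      (⨆ n, Submodule.span Rᵐᵒᵖ ({e n} : Set R)) = A ∧
      (∀ n, Submodule.span Rᵐᵒᵖ ({e n} : Set R) ⊓
        (⨆ m, ⨆ _ : m ≠ n, Submodule.span Rᵐᵒᵖ ({e m} : Set R)) = ⊥) := by
  have h𝒜 : IsGradedRegular 𝒜 := .of_fg_homogeneous_eq_span_idempotent fun I hI hfg ↦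
    (hreg I (fun a ha n ↦ hI n ha) hfg).imp fun _ he ↦ ⟨he.1, he.2.2⟩
  obtain ⟨e, horth, hdeg, hsup, hindep⟩ := stmt_11_general 𝒜 h𝒜 (fun n a ha ↦ hA a ha n) hcg
  refine ⟨e, fun n ↦ hsup.le ?_, horth.idem, fun n ↦ ⟨0, hdeg n⟩, fun m n hmn ↦ horth.ortho hmn,
    hsup, fun n ↦ (hindep n).eq_bot⟩
  exact Submodule.mem_iSup_of_mem n (Submodule.mem_span_singleton_self _)
end

section
/- Let R be a unital ring such that every simple left R-module is injective (i.e., R is a left V-ring). Then R is left weakly regular: I² = I for every left ideal I of R, where I² denotes the left ideal generated by all products ab with a, b ∈ I. -/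
universe u

/-!
Over a left V-ring, Jacobson radicals restrict to submodules, because maps onto simple modules
extend. A nonzero cyclic module is not its own radical, so every module has zero radical. Applied
to `R ⧸ J`, this is Villamayor's theorem: every left ideal `J` is an intersection of maximal left
ideals.

Over any ring, a maximal left ideal `m` containing `I²` contains `I`: if `a ∈ I` were not in `m`,
then `1 = r * a + n` for some `r` and some `n ∈ m`, so that `a = a * (r * a) + a * n ∈ m`.
-/

theorem isInjectiveModule_iff_injective {R Q : Type u} [Ring R] [AddCommGroup Q] [Module R Q] :
    IsInjectiveModule R Q ↔ Module.Injective R Q :=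
  (Module.injective_iff R Q).symm

/-- A left V-ring: a ring all of whose simple left modules are injective. Only modules in the
universe of `R` are quantified over: each simple module is isomorphic to `R ⧸ m` for some maximal
left ideal `m`. -/
def IsLeftVRing (R : Type u) [Ring R] : Prop :=
  ∀ (S : Type u) [AddCommGroup S] [Module R S], IsSimpleModule R S → Module.Injective R S

section LeftIdeal

variable {R : Type*} [Ring R]

theorem span_setOf_mul_eq_mul (I J : Ideal R) :
    Submodule.span R {z : R | ∃ a ∈ I, ∃ b ∈ J, z = a * b} = I * J := by
  apply le_antisymm
  · rw [Submodule.span_le]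
    rintro _ ⟨a, ha, b, hb, rfl⟩
    exact Ideal.mul_mem_mul ha hb
  · exact Ideal.mul_le.mpr fun a ha b hb ↦ Submodule.subset_span ⟨a, ha, b, hb, rfl⟩

theorem le_jacobson_mul_self (I : Ideal R) : I ≤ (I * I).jacobson := by
  refine le_sInf fun m ⟨hIm, hm⟩ a ha ↦ ?_
  by_contra ham
  obtain ⟨r, n, hn, hrn⟩ := hm.exists_inv ham
  have h_mul : a * (r * a) ∈ m := hIm (Ideal.mul_mem_mul ha (I.mul_mem_left r ha))
  have h_eq : a * (r * a) + a * n = a := by rw [← mul_add, hrn, mul_one]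
  exact ham (h_eq ▸ m.add_mem h_mul (m.mul_mem_left a hn))

theorem comap_mkQ_jacobson (J : Ideal R) :
    (Module.jacobson R (R ⧸ J)).comap J.mkQ = J.jacobson := by
  apply le_antisymm
  · refine le_sInf fun m ⟨hJm, hm⟩ x hx ↦ ?_
    have hker : LinearMap.ker J.mkQ ≤ m := J.ker_mkQ.trans_le hJm
    have hmap : IsCoatom (m.map J.mkQ) :=
      Submodule.isCoatom_map_of_ker_le J.mkQ_surjective hker hm.out
    rw [← Submodule.comap_map_eq_self hker]
    exact Submodule.mem_sInf.mp hx _ hmap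
  · refine fun x hx ↦ Submodule.mem_sInf.mpr fun m hm ↦ ?_
    have hcomap : IsCoatom (m.comap J.mkQ) :=
      (Submodule.isCoatom_comap_iff J.mkQ_surjective).mpr hm
    exact Submodule.mem_sInf.mp hx _ ⟨J.le_comap_mkQ m, ⟨hcomap⟩⟩

end LeftIdeal

namespace IsLeftVRing

variable {R : Type u} [Ring R]

theorem baer (hR : IsLeftVRing R) (S : Type*) [AddCommGroup S] [Module R S]
    [IsSimpleModule R S] : Module.Baer R S := by
  obtain ⟨m, hm, ⟨e⟩⟩ := isSimpleModule_iff_quot_maximal.mp ‹IsSimpleModule R S›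
  have hquot : IsSimpleModule R (R ⧸ m) := isSimpleModule_iff_isCoatom.mpr hm.out
  exact (Module.Baer.of_injective (hR (R ⧸ m) hquot)).of_equiv e.symm

section Module

variable {M N : Type*} [AddCommGroup M] [Module R M] [AddCommGroup N] [Module R N]

theorem comap_jacobson_of_injective (hR : IsLeftVRing R) {f : N →ₗ[R] M}
    (hf : Function.Injective f) : (Module.jacobson R M).comap f = Module.jacobson R N := by
  refine le_antisymm (fun x hx ↦ Submodule.mem_sInf.mpr fun m hm ↦ ?_)
    (Module.le_comap_jacobson f)
  have : IsSimpleModule R (N ⧸ m) := isSimpleModule_iff_isCoatom.mpr hm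
  obtain ⟨g, hg⟩ := (hR.baer (N ⧸ m)).extension_property f hf m.mkQ
  have hgf : g (f x) ∈ Module.jacobson R (N ⧸ m) := Module.le_comap_jacobson g hx
  rw [IsSimpleModule.jacobson_eq_bot, Submodule.mem_bot] at hgf
  rw [← Submodule.Quotient.mk_eq_zero, ← Submodule.mkQ_apply, ← hg, LinearMap.comp_apply, hgf]

variable (M) in
theorem module_jacobson_eq_bot (hR : IsLeftVRing R) : Module.jacobson R M = ⊥ := by
  refine (Submodule.eq_bot_iff _).mpr fun x hx ↦ ?_
  by_contra hx0
  have : Nontrivial (R ∙ x) := Submodule.nontrivial_span_singleton hx0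
  have hspan : R ∙ x ≤ Module.jacobson R M := (Submodule.span_singleton_le_iff_mem _ _).mpr hx
  have htop : Module.jacobson R (R ∙ x) = ⊤ := by
    rw [← hR.comap_jacobson_of_injective (R ∙ x).injective_subtype,
      Submodule.comap_subtype_eq_top.mpr hspan]
  exact (Module.jacobson_lt_top R (R ∙ x)).ne htop

end Module

theorem ideal_jacobson_eq_self (hR : IsLeftVRing R) (J : Ideal R) : J.jacobson = J := by
  rw [← comap_mkQ_jacobson, hR.module_jacobson_eq_bot (R ⧸ J), Submodule.comap_bot,
    Submodule.ker_mkQ]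

theorem ideal_mul_self (hR : IsLeftVRing R) (I : Ideal R) : I * I = I :=
  le_antisymm Ideal.mul_le_right <|
    (le_jacobson_mul_self I).trans_eq (hR.ideal_jacobson_eq_self (I * I))

end IsLeftVRing

/-- If every simple left `R`-module is injective (`R` is a left V-ring), then `R` is
left weakly regular: `I² = I` for every left ideal `I` of `R`, where `I²` is the
left ideal generated by all products `a*b` with `a, b ∈ I`.  Left ideals are
formalized as `R`-submodules of `R`. -/
theorem stmt_13 {R : Type u} [Ring R]
    (hV : ∀ (S : Type u) [AddCommGroup S] [Module R S], IsSimpleModule R S →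
      IsInjectiveModule R S) :
    ∀ I : Submodule R R,
      Submodule.span R {z : R | ∃ a ∈ I, ∃ b ∈ I, z = a * b} = I := by
  intro I
  have hR : IsLeftVRing R := fun S _ _ hS ↦ isInjectiveModule_iff_injective.mp (hV S hS)
  rw [span_setOf_mul_eq_mul, hR.ideal_mul_self]
end
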